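/- Let $G$ be a linearly surjunctive group and let $K$ be a field. Then the group ring $K[G]$ is stably finite. -/

import Mathlib

/-!
Let `M * N = 1` for square matrices over `K[G]`.

*Finite fields.* A matrix `M` over `k[G]` acts on `(k^d)^G` by the linear cellular automaton
`τ_M x h i = ∑ j, ∑ g, M i j g • x (h * g) j` (`matrixCA`), and `M ↦ τ_M` is multiplicative
(`matrixCA_mul`) and faithful (`matrixCA_eq_id`). From `τ_M ∘ τ_N = id` the map `τ_N` is injective,
hence surjective by linear surjunctivity, hence `τ_N ∘ τ_M = id` and `N * M = 1`.

*Arbitrary fields.* The coefficients of `M` and `N` lie in a finitely generated subring `R` of `K`.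
As `ℤ` is a Jacobson ring, so is `R`, and its residue fields at maximal ideals are finite
(Zariski's lemma); hence the homomorphisms from `R` to finite fields separate the points of `R`
(`exists_finite_field_ne_zero`). Each of them sends `N * M - 1` to zero by the finite field case,
so `N * M = 1`.
-/

/-- A ring `R` is stably finite if for every `d ≥ 1` and all `d × d` matrices `A B` over `R`,
`A * B = 1` implies `B * A = 1`. -/
def IsStablyFinite (R : Type*) [Ring R] : Prop :=
  ∀ d : ℕ, 1 ≤ d → ∀ A B : Matrix (Fin d) (Fin d) R, A * B = 1 → B * A = 1

/-- A group `G` is linearly surjunctive if for every finite field `k` and every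
finite-dimensional `k`-vector space `A`, every injective `k`-linear `G`-equivariant
map `τ : A^G → A^G` which is continuous for the prodiscrete topology is surjective. -/
def LinearlySurjunctive (G : Type*) [Group G] : Prop :=
  ∀ (k : Type) [Field k] [Finite k]
    (A : Type) [AddCommGroup A] [Module k A] [FiniteDimensional k A]
    (τ : (G → A) → (G → A)),
    Function.Injective τ →
    IsLinearMap k τ →
    (∀ (g : G) (x : G → A), τ (fun h => x (g * h)) = fun h => τ x (g * h)) →
    @Continuous (G → A) (G → A)
      (@Pi.topologicalSpace G (fun _ => A) fun _ => ⊥)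
      (@Pi.topologicalSpace G (fun _ => A) fun _ => ⊥) τ →
    Function.Surjective τ

/-! ### Linear cellular automata from matrices over the group ring -/

section FiniteField

variable {G k : Type*} [Group G] [Field k]

/-- The right regular representation of `G` on functions `G → k`: `g` sends `x` to `h ↦ x (h * g)`.
It commutes with the left shifts. -/
def rightShift (G k : Type*) [Group G] [Field k] : G →* Module.End k (G → k) where
  toFun g := LinearMap.funLeft k k (fun h => h * g)
  map_one' := by ext; simp [LinearMap.funLeft]
  map_mul' a b := by
    ext x h
    simp [LinearMap.funLeft, mul_assoc]

/-- The action of `k[G]` on `G → k` extending `rightShift`. -/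
noncomputable def algAct (G k : Type*) [Group G] [Field k] :
    MonoidAlgebra k G →ₐ[k] Module.End k (G → k) :=
  MonoidAlgebra.lift k (Module.End k (G → k)) G (rightShift G k)

lemma algAct_apply (a : MonoidAlgebra k G) (x : G → k) (h : G) :
    algAct G k a x h = ∑ g ∈ a.coeff.support, a.coeff g * x (h * g) := by
  simp [algAct, MonoidAlgebra.lift_apply, Finsupp.sum, rightShift, LinearMap.funLeft,
    LinearMap.sum_apply]

/-- The linear cellular automaton on `(k^d)^G` defined by a `d × d` matrix over `k[G]`. -/
noncomputable def matrixCA {d : ℕ} (M : Matrix (Fin d) (Fin d) (MonoidAlgebra k G)) :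
    (G → Fin d → k) → (G → Fin d → k) :=
  fun x h i => ∑ j, algAct G k (M i j) (fun h' => x h' j) h

lemma matrixCA_mul {d : ℕ} (M N : Matrix (Fin d) (Fin d) (MonoidAlgebra k G))
    (x : G → Fin d → k) : matrixCA (M * N) x = matrixCA M (matrixCA N x) := by
  funext h i
  have key : ∀ j, (fun h' => matrixCA N x h' j)
      = ∑ l, algAct G k (N j l) (fun h' => x h' l) := by
    intro j
    funext h'
    simp [matrixCA]
  simp only [matrixCA] at key ⊢
  simp only [key, Matrix.mul_apply, map_sum, map_mul, LinearMap.sum_apply, Finset.sum_apply,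
    Module.End.mul_apply]
  exact Finset.sum_comm

lemma matrixCA_one {d : ℕ} (x : G → Fin d → k) :
    matrixCA (1 : Matrix (Fin d) (Fin d) (MonoidAlgebra k G)) x = x := by
  funext h i
  simp only [matrixCA]
  rw [Finset.sum_eq_single i]
  · simp
  · intro j _ hj
    simp [Matrix.one_apply_ne hj.symm]
  · simp

/-- The automaton determines the matrix: the coefficient of `M i l` at `g` is read off from the
value at `g⁻¹` of the image of the configuration supported at `1` with value the `l`-th basis
vector. -/
lemma coeff_eq_matrixCA {d : ℕ} (M : Matrix (Fin d) (Fin d) (MonoidAlgebra k G))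
    (i l : Fin d) (g : G) [DecidableEq G] :
    (M i l).coeff g = matrixCA M (fun h j => if h = 1 ∧ j = l then 1 else 0) g⁻¹ i := by
  simp only [matrixCA, algAct_apply]
  rw [Finset.sum_eq_single l]
  · rw [Finset.sum_eq_single g]
    · simp
    · intro b _ hb
      have : ¬ (g⁻¹ * b = 1) := fun h => hb (inv_mul_eq_one.mp h).symm
      simp [this]
    · intro h
      simp [Finsupp.notMem_support_iff.mp h]
  · intro j _ hj
    simp [hj]
  · simp

lemma matrixCA_eq_id {d : ℕ} {M : Matrix (Fin d) (Fin d) (MonoidAlgebra k G)}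
    (hM : ∀ x, matrixCA M x = x) : M = 1 := by
  classical
  ext i l g
  rw [coeff_eq_matrixCA, coeff_eq_matrixCA, hM, matrixCA_one]

/-- A function of a configuration that only depends on finitely many cells is continuous. -/
lemma continuous_of_dependsOn_finset {X A B : Type*} [TopologicalSpace A] [DiscreteTopology A]
    [TopologicalSpace B] (f : (X → A) → B) (F : Finset X)
    (hf : ∀ x y : X → A, (∀ g ∈ F, x g = y g) → f x = f y) : Continuous f := by
  refine IsLocallyConstant.continuous ((IsLocallyConstant.iff_exists_open f).2 fun x => ?_)
  refine ⟨(F : Set X).pi fun g => {x g}, isOpen_set_pi F.finite_toSet fun g _ => isOpen_discrete _,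
    fun g _ => rfl, fun y hy => hf _ _ fun g hg => hy g hg⟩

lemma continuous_matrixCA {d : ℕ} (M : Matrix (Fin d) (Fin d) (MonoidAlgebra k G)) :
    @Continuous (G → Fin d → k) (G → Fin d → k)
      (@Pi.topologicalSpace G (fun _ => Fin d → k) fun _ => ⊥)
      (@Pi.topologicalSpace G (fun _ => Fin d → k) fun _ => ⊥) (matrixCA M) := by
  classical
  let : TopologicalSpace (Fin d → k) := ⊥
  have : DiscreteTopology (Fin d → k) := ⟨rfl⟩
  refine continuous_pi fun h => ?_
  refine continuous_of_dependsOn_finset _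
    (Finset.univ.biUnion fun i => Finset.univ.biUnion fun j =>
      (M i j).coeff.support.image fun g => h * g) fun x y hxy => ?_
  funext i
  simp only [matrixCA, algAct_apply]
  refine Finset.sum_congr rfl fun j _ => Finset.sum_congr rfl fun g hg => ?_
  rw [hxy (h * g)]
  simp only [Finset.mem_biUnion, Finset.mem_univ, true_and, Finset.mem_image]
  exact ⟨i, j, g, hg, rfl⟩

end FiniteField

/-- The case of a finite field (in the universe over which `LinearlySurjunctive` quantifies). -/
lemma stablyFinite_of_finite_field {G : Type*} [Group G] (hG : LinearlySurjunctive G)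
    (k : Type) [Field k] [Finite k] : IsStablyFinite (MonoidAlgebra k G) := by
  intro d _ M N hMN
  have hid : ∀ x, matrixCA M (matrixCA N x) = x := fun x => by
    rw [← matrixCA_mul, hMN, matrixCA_one]
  have hsurj : Function.Surjective (matrixCA N) := by
    refine hG k (Fin d → k) (matrixCA N) (Function.LeftInverse.injective hid) ⟨?_, ?_⟩ ?_
      (continuous_matrixCA N)
    · intro x y
      funext h i
      simp [matrixCA, algAct_apply, mul_add, Finset.sum_add_distrib]
    · intro c x
      funext h i
      simp [matrixCA, algAct_apply, Finset.mul_sum, mul_left_comm]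
    · intro g x
      funext h i
      simp [matrixCA, algAct_apply, mul_assoc]
  refine matrixCA_eq_id fun x => ?_
  obtain ⟨y, rfl⟩ := hsurj x
  rw [matrixCA_mul, hid]

/-! ### Reduction to finite fields -/

section Reduction

lemma isJacobsonRing_int : IsJacobsonRing ℤ := by
  refine isJacobsonRing_iff_prime_eq.2 fun P hP => ?_
  by_cases h : P = ⊥
  · subst h
    refine (eq_bot_iff).2 fun n hn => ?_
    -- `n * n + 1` is a unit, which forces `n = 0`
    have := Ideal.mem_jacobson_bot.1 hn n
    rw [Int.isUnit_iff] at this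
    rw [Ideal.mem_bot]
    rcases this with h | h <;> nlinarith
  · have := hP.isMaximal h
    exact Ideal.jacobson_eq_self_of_isMaximal

lemma finite_of_finiteType_int (S : Type*) [Field S] [Algebra.FiniteType ℤ S] : Finite S := by
  have := isJacobsonRing_int
  have : Module.Finite ℤ S := finite_of_finite_type_of_isJacobsonRing ℤ S
  obtain ⟨p, hp⟩ := CharP.exists S
  rcases CharP.char_is_prime_or_zero S p with hpp | h0
  · have : Fact p.Prime := ⟨hpp⟩
    let := ZMod.algebra S p
    have : Module.Finite (ZMod p) S := Module.Finite.of_restrictScalars_finite ℤ (ZMod p) S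
    exact Module.finite_of_finite (ZMod p)
  · subst h0
    have := CharP.charP_to_charZero S
    exact absurd (isField_of_isIntegral_of_isField
      (FaithfulSMul.algebraMap_injective ℤ S) (Field.toIsField S)) Int.not_isField

/-- Homomorphisms to finite fields separate the points of a finitely generated domain. -/
lemma exists_finite_field_ne_zero (R : Type*) [CommRing R] [IsDomain R] [Algebra.FiniteType ℤ R]
    (c : R) (hc : c ≠ 0) :
    ∃ (k : Type) (_ : Field k) (_ : Finite k) (φ : R →+* k), φ c ≠ 0 := by
  have := isJacobsonRing_int
  have : IsJacobsonRing R := isJacobsonRing_of_finiteType (A := ℤ)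
  have hcj : c ∉ (⊥ : Ideal R).jacobson := by
    rw [← Ideal.radical_eq_jacobson, Ideal.IsPrime.radical Ideal.isPrime_bot]
    simpa using hc
  simp only [Ideal.jacobson, Ideal.mem_sInf, not_forall] at hcj
  obtain ⟨m, ⟨-, hm⟩, hcm⟩ := hcj
  let := Ideal.Quotient.field m
  have : Algebra.FiniteType ℤ (R ⧸ m) :=
    Algebra.FiniteType.of_surjective (Ideal.Quotient.mkₐ ℤ m) (Ideal.Quotient.mkₐ_surjective ℤ m)
  -- given explicitly: instance search does not unfold far enough to identify the `ℤ`-algebra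
  -- structures of the quotient and of its field structure
  have : Finite (R ⧸ m) := @finite_of_finiteType_int (R ⧸ m) _ this
  have : Small.{0} (R ⧸ m) := inferInstance
  -- `Shrink` moves the residue field to the universe of `LinearlySurjunctive`
  refine ⟨Shrink.{0} (R ⧸ m), inferInstance, Finite.of_equiv _ (equivShrink _),
    ((Shrink.ringEquiv (R ⧸ m)).symm : (R ⧸ m) →+* Shrink.{0} (R ⧸ m)).comp
      (Ideal.Quotient.mk m), ?_⟩
  simpa [Ideal.Quotient.eq_zero_iff_mem] using hcm

/-- Stable finiteness over `R` follows from stable finiteness over the finite fields receiving a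
homomorphism from `R`. -/
lemma stablyFinite_of_finiteType {G : Type*} [Group G] (hG : LinearlySurjunctive G)
    (R : Type*) [CommRing R] [IsDomain R] [Algebra.FiniteType ℤ R] :
    IsStablyFinite (MonoidAlgebra R G) := by
  intro d hd M N hMN
  by_contra hne
  have : ∃ i j g, ((N * M) i j - (1 : Matrix _ _ (MonoidAlgebra R G)) i j).coeff g ≠ 0 := by
    by_contra! h
    refine hne ?_
    ext i j g
    simpa [sub_eq_zero] using h i j g
  obtain ⟨i, j, g, hg⟩ := this
  obtain ⟨k, _, _, φ, hφ⟩ := exists_finite_field_ne_zero R _ hg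
  let Φ : MonoidAlgebra R G →+* MonoidAlgebra k G := MonoidAlgebra.mapRingHom G φ
  have h1 : Φ.mapMatrix M * Φ.mapMatrix N = 1 := by
    rw [← map_mul, hMN, map_one]
  have h2 := stablyFinite_of_finite_field hG k d hd _ _ h1
  rw [← map_mul] at h2
  apply hφ
  have h3 : Φ ((N * M) i j - (1 : Matrix _ _ (MonoidAlgebra R G)) i j) = 0 := by
    have h4 := congrFun (congrFun (h2.trans (map_one Φ.mapMatrix).symm) i) j
    rw [map_sub, sub_eq_zero]
    exact h4
  have h5 := congrArg (fun a => a.coeff g) h3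
  simpa [Φ] using h5

/-- An element of `K[G]` with coefficients in a subring `R` comes from `R[G]`. -/
lemma exists_lift_of_coeff_mem {G K : Type*} [Group G] [Field K] (R : Subalgebra ℤ K)
    (a : MonoidAlgebra K G) (ha : ∀ g, a.coeff g ∈ R) :
    ∃ b : MonoidAlgebra R G, MonoidAlgebra.mapRingHom G (R.val : R →+* K) b = a := by
  classical
  refine ⟨.ofCoeff (Finsupp.onFinset a.coeff.support (fun g => ⟨a.coeff g, ha g⟩) ?_), ?_⟩
  · intro g hg
    simpa [Subtype.ext_iff] using hg
  · ext g
    simp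

end Reduction

theorem linearly_surjunctive_group_ring_stably_finite
    {G : Type*} [Group G] (hG : LinearlySurjunctive G)
    (K : Type*) [Field K] : IsStablyFinite (MonoidAlgebra K G) := by
  classical
  intro d hd M N hMN
  let S : Finset K := Finset.univ.biUnion fun i => Finset.univ.biUnion fun j =>
    (M i j).coeff.support.image (M i j).coeff ∪ (N i j).coeff.support.image (N i j).coeff
  let R : Subalgebra ℤ K := Algebra.adjoin ℤ (S : Set K)
  have : Algebra.FiniteType ℤ R := R.fg_iff_finiteType.1 ⟨S, rfl⟩
  have hM : ∀ i j g, (M i j).coeff g ∈ R := by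
    intro i j g
    by_cases h : (M i j).coeff g = 0
    · rw [h]; exact zero_mem R
    · refine Algebra.subset_adjoin ?_
      simp only [S, Finset.coe_biUnion, Set.mem_iUnion, Finset.mem_coe, Finset.mem_univ,
        Finset.mem_union, Finset.mem_image, Finsupp.mem_support_iff]
      exact ⟨i, trivial, j, trivial, Or.inl ⟨g, h, rfl⟩⟩
  have hN : ∀ i j g, (N i j).coeff g ∈ R := by
    intro i j g
    by_cases h : (N i j).coeff g = 0
    · rw [h]; exact zero_mem R
    · refine Algebra.subset_adjoin ?_
      simp only [S, Finset.coe_biUnion, Set.mem_iUnion, Finset.mem_coe, Finset.mem_univ,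
        Finset.mem_union, Finset.mem_image, Finsupp.mem_support_iff]
      exact ⟨i, trivial, j, trivial, Or.inr ⟨g, h, rfl⟩⟩
  choose M' hM' using fun i j => exists_lift_of_coeff_mem R (M i j) (hM i j)
  choose N' hN' using fun i j => exists_lift_of_coeff_mem R (N i j) (hN i j)
  let Φ : MonoidAlgebra R G →+* MonoidAlgebra K G :=
    MonoidAlgebra.mapRingHom G (R.val : R →+* K)
  have hΦ : Function.Injective Φ :=
    MonoidAlgebra.map_injective ((R.val : R →+* K) : R →+ K) Subtype.val_injective
  have hΦM : Φ.mapMatrix (Matrix.of M') = M := by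
    refine Matrix.ext fun i j => ?_
    exact hM' i j
  have hΦN : Φ.mapMatrix (Matrix.of N') = N := by
    refine Matrix.ext fun i j => ?_
    exact hN' i j
  have h1 : Matrix.of M' * Matrix.of N' = 1 := by
    apply Matrix.map_injective hΦ
    change Φ.mapMatrix _ = Φ.mapMatrix _
    rw [map_mul, hΦM, hΦN, hMN, map_one]
  have h2 := stablyFinite_of_finiteType hG R d hd _ _ h1
  rw [← hΦM, ← hΦN, ← map_mul, h2, map_one]
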